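/- arXiv:math/9509211 — 3 statements merged into one kernel-verified Lean document; each statement's English description precedes it below -/
import Mathlib

section
/- Every σ-compact topological space (a space that is the union of countably many compact subsets) satisfies both Sfin(Ω,Ω) and Ufin(Γ,Γ). -/
open Set

universe u

variable {X : Type u} [TopologicalSpace X]

/-- A γ-cover: a countably infinite family of open sets such that every point
belongs to all but finitely many members. -/
def IsGammaCover (U : Set (Set X)) : Prop :=
  U.Countable ∧ U.Infinite ∧ (∀ u ∈ U, IsOpen u) ∧ ∀ x : X, {u ∈ U | x ∉ u}.Finite

/-- A large cover: a countable family of open sets such that every point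
belongs to infinitely many members. -/
def IsLargeCover (U : Set (Set X)) : Prop :=
  U.Countable ∧ (∀ u ∈ U, IsOpen u) ∧ ∀ x : X, {u ∈ U | x ∈ u}.Infinite

/-- An ω-cover: a countable family of open sets, not containing `univ`, such
that every finite subset of the space is contained in some member. -/
def IsOmegaCover (U : Set (Set X)) : Prop :=
  U.Countable ∧ (∀ u ∈ U, IsOpen u) ∧ univ ∉ U ∧
    ∀ F : Set X, F.Finite → ∃ u ∈ U, F ⊆ u

/-- A (countable) open cover. -/
def IsCountableOpenCover (U : Set (Set X)) : Prop :=
  U.Countable ∧ (∀ u ∈ U, IsOpen u) ∧ ⋃₀ U = univ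

/-- The selection principle S1(A,B). -/
def S1 (A B : Set (Set X) → Prop) : Prop :=
  ∀ U : ℕ → Set (Set X), (∀ n, A (U n)) →
    ∃ V : ℕ → Set X, (∀ n, V n ∈ U n) ∧ B (range V)

/-- The selection principle Sfin(A,B). -/
def Sfin (A B : Set (Set X) → Prop) : Prop :=
  ∀ U : ℕ → Set (Set X), (∀ n, A (U n)) →
    ∃ V : ℕ → Set (Set X), (∀ n, (V n).Finite ∧ V n ⊆ U n) ∧ B (⋃ n, V n)

/-- The selection principle Ufin(Γ,B). -/
def Ufin (B : Set (Set X) → Prop) : Prop :=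
  ∀ U : ℕ → Set (Set X), (∀ n, IsGammaCover (U n)) →
    ∃ V : ℕ → Set (Set X), (∀ n, (V n).Finite ∧ V n ⊆ U n) ∧
      ((∃ n, ⋃₀ (V n) = univ) ∨ B (range fun n => ⋃₀ (V n)))

/-!
A finite subset of `X` is the range of a tuple, that is, of a point of the disjoint union `Y` of the
powers `X ^ k`, and a tuple with range in `u` is a point of `u ^ k`. Replacing each `u ∈ U` by the
disjoint union of its powers therefore turns an ω-cover `U` of `X` into an open cover of `Y`, and
`Sfin(Ω, Ω)` for `X` follows from the Menger property of `Y`.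

If `X` is σ-compact then so is `Y`. In a σ-compact space, choosing from the `n`-th cover finitely
many members that cover the `n`-th set of a compact exhaustion gives the Hurewicz property: every
point is covered at all but finitely many stages. This implies both the Menger property and
`Ufin(Γ, Γ)`.
-/

open Filter

section Hurewicz

/-- The Hurewicz property of a space, for countable open covers. It lies between σ-compactness and
the Menger property `Sfin IsCountableOpenCover IsCountableOpenCover`. The finite subfamilies are
indexed by stages, so that repetitions among their unions are allowed and need no separate case. -/
def IsHurewiczSpace (X : Type u) [TopologicalSpace X] : Prop :=
  ∀ U : ℕ → Set (Set X), (∀ n, IsCountableOpenCover (U n)) →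
    ∃ V : ℕ → Set (Set X), (∀ n, (V n).Finite ∧ V n ⊆ U n) ∧
      ∀ x, ∀ᶠ n in atTop, x ∈ ⋃₀ V n

theorem isHurewiczSpace_of_sigmaCompactSpace [SigmaCompactSpace X] : IsHurewiczSpace X := by
  intro U hU
  have exists_finite_subcover (n : ℕ) :
      ∃ V ⊆ U n, V.Finite ∧ compactCovering X n ⊆ ⋃ v ∈ V, v := by
    obtain ⟨-, isOpen_of_mem, sUnion_eq⟩ := hU n
    refine (isCompact_compactCovering X n).elim_finite_subcover_image isOpen_of_mem ?_
    rw [← sUnion_eq_biUnion, sUnion_eq]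
    exact subset_univ _
  choose V hVU hVfin hV using exists_finite_subcover
  refine ⟨V, fun n ↦ ⟨hVfin n, hVU n⟩, fun x ↦ ?_⟩
  obtain ⟨k, hxk⟩ := exists_mem_compactCovering x
  filter_upwards [eventually_ge_atTop k] with n hkn
  rw [sUnion_eq_biUnion]
  exact hV n (compactCovering_subset X hkn hxk)

theorem IsHurewiczSpace.sfin_isCountableOpenCover (hX : IsHurewiczSpace X) :
    Sfin (X := X) IsCountableOpenCover IsCountableOpenCover := by
  intro U hU
  obtain ⟨V, hVU, hV⟩ := hX U hU
  refine ⟨V, hVU, countable_iUnion fun n ↦ (hVU n).1.countable, ?_, ?_⟩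
  · exact iUnion_subset fun n ↦ (hVU n).2.trans (hU n).2.1
  · rw [sUnion_iUnion, iUnion_eq_univ_iff]
    exact fun x ↦ (hV x).exists

end Hurewicz

section GammaCover

theorem IsGammaCover.isCountableOpenCover {U : Set (Set X)} (hU : IsGammaCover U) :
    IsCountableOpenCover U := by
  obtain ⟨countable, infinite, isOpen_of_mem, finite_notMem⟩ := hU
  refine ⟨countable, isOpen_of_mem, sUnion_eq_univ_iff.2 fun x ↦ ?_⟩
  obtain ⟨u, huU, hu⟩ := infinite.exists_notMem_finite (finite_notMem x)
  exact ⟨u, huU, not_not.1 fun hxu ↦ hu ⟨huU, hxu⟩⟩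

theorem infinite_range_of_eventually_mem {α ι : Type*} {l : Filter ι} [l.NeBot] {W : ι → Set α}
    (hW : ∀ x, ∀ᶠ i in l, x ∈ W i) (hne : ∀ i, W i ≠ univ) : (range W).Infinite := by
  intro hfin
  have : Finite (range W) := hfin
  have exists_notMem : ∀ w : range W, ∃ x, x ∉ w.1 := by
    rintro ⟨_, i, rfl⟩
    exact (ne_univ_iff_exists_notMem (W i)).1 (hne i)
  choose x hx using exists_notMem
  obtain ⟨i, hi⟩ : ∃ i, ∀ w, x w ∈ W i := (eventually_all.2 fun w ↦ hW (x w)).exists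
  exact hx ⟨W i, mem_range_self i⟩ (hi _)

theorem isGammaCover_range {ι : Type*} [Countable ι] [Infinite ι] {W : ι → Set X}
    (hWo : ∀ i, IsOpen (W i)) (hW : ∀ x, ∀ᶠ i in cofinite, x ∈ W i) (hne : ∀ i, W i ≠ univ) :
    IsGammaCover (range W) := by
  refine ⟨countable_range W, infinite_range_of_eventually_mem hW hne, forall_mem_range.2 hWo, ?_⟩
  intro x
  have finite_notMem : {i | x ∉ W i}.Finite := hW x
  refine (finite_notMem.image W).subset ?_
  rintro _ ⟨⟨i, rfl⟩, hxi⟩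
  exact mem_image_of_mem W hxi

theorem IsHurewiczSpace.ufin_isGammaCover (hX : IsHurewiczSpace X) :
    Ufin (X := X) IsGammaCover := by
  intro U hU
  obtain ⟨V, hVU, hV⟩ := hX U fun n ↦ (hU n).isCountableOpenCover
  refine ⟨V, hVU, or_iff_not_imp_left.2 fun hne ↦ ?_⟩
  refine isGammaCover_range (fun n ↦ isOpen_sUnion fun u hu ↦ ?_) ?_ (not_exists.1 hne)
  · exact (hU n).2.2.1 u ((hVU n).2 hu)
  · rwa [Nat.cofinite_eq_atTop]

end GammaCover

section OmegaCover

/-- The disjoint union of the finite powers of `u`, as a subset of the disjoint union of the finite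
powers of the ambient type. It turns inclusions of finite sets in `u` into membership of points. -/
def tuplesIn {α : Type*} (u : Set α) : Set (Σ k, Fin k → α) :=
  {t | range t.2 ⊆ u}

theorem preimage_tuplesIn {α : Type*} (u : Set α) :
    (fun x ↦ (⟨1, fun _ ↦ x⟩ : Σ k, Fin k → α)) ⁻¹' tuplesIn u = u := by
  ext x
  simp [tuplesIn]

theorem tuplesIn_injective {α : Type*} : Function.Injective (tuplesIn (α := α)) :=
  Function.LeftInverse.injective preimage_tuplesIn

theorem isOpen_tuplesIn_iff {u : Set X} : IsOpen (tuplesIn u) ↔ IsOpen u := by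
  refine ⟨fun h ↦ ?_, fun h ↦ isOpen_sigma_iff.2 fun k ↦ ?_⟩
  · rw [← preimage_tuplesIn u]
    exact h.preimage (continuous_sigmaMk.comp (continuous_pi fun _ ↦ continuous_id))
  · have preimage_eq_pi : Sigma.mk k ⁻¹' tuplesIn u = univ.pi fun _ ↦ u := by
      ext t
      simp [tuplesIn, range_subset_iff]
    rw [preimage_eq_pi]
    exact isOpen_set_pi finite_univ fun _ _ ↦ h

theorem sUnion_image_tuplesIn_eq_univ_iff {α : Type*} {U : Set (Set α)} :
    ⋃₀ (tuplesIn '' U) = univ ↔ ∀ F : Set α, F.Finite → ∃ u ∈ U, F ⊆ u := by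
  rw [sUnion_eq_univ_iff]
  simp only [exists_mem_image]
  constructor
  · intro h F hF
    obtain ⟨k, t, -, rfl⟩ := hF.fin_param
    exact h ⟨k, t⟩
  · exact fun h t ↦ h (range t.2) (finite_range t.2)

theorem isOmegaCover_iff_isCountableOpenCover_image_tuplesIn {U : Set (Set X)} :
    IsOmegaCover U ↔ univ ∉ U ∧ IsCountableOpenCover (tuplesIn '' U) := by
  have countable_image_iff : (tuplesIn '' U).Countable ↔ U.Countable :=
    ⟨countable_of_injective_of_countable_image tuplesIn_injective.injOn, fun h ↦ h.image _⟩
  simp only [IsOmegaCover, IsCountableOpenCover, sUnion_image_tuplesIn_eq_univ_iff,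
    forall_mem_image, isOpen_tuplesIn_iff, countable_image_iff]
  tauto

theorem sfin_isOmegaCover_of_sfin_sigma_pi
    (h : Sfin (X := Σ k, Fin k → X) IsCountableOpenCover IsCountableOpenCover) :
    Sfin (X := X) IsOmegaCover IsOmegaCover := by
  intro U hU
  simp only [isOmegaCover_iff_isCountableOpenCover_image_tuplesIn] at hU ⊢
  obtain ⟨W, hWU, hW⟩ := h (fun n ↦ tuplesIn '' U n) fun n ↦ (hU n).2
  have exists_image_eq (n : ℕ) : ∃ V ⊆ U n, V.Finite ∧ W n = tuplesIn '' V :=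
    exists_subset_image_finite_and.1 ⟨W n, (hWU n).2, (hWU n).1, rfl⟩
  choose V hVU hVfin hVW using exists_image_eq
  refine ⟨V, fun n ↦ ⟨hVfin n, hVU n⟩, fun huniv ↦ ?_, ?_⟩
  · obtain ⟨n, hn⟩ := mem_iUnion.1 huniv
    exact (hU n).1 (hVU n hn)
  · simpa only [image_iUnion, ← hVW] using hW

end OmegaCover

theorem stmt3 {X : Type u} [TopologicalSpace X]
    (hX : ∃ K : ℕ → Set X, (∀ n, IsCompact (K n)) ∧ (⋃ n, K n) = univ) :
    Sfin (X := X) IsOmegaCover IsOmegaCover ∧ Ufin (X := X) IsGammaCover := by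
  have : SigmaCompactSpace X := ⟨hX⟩
  exact ⟨sfin_isOmegaCover_of_sfin_sigma_pi
      isHurewiczSpace_of_sigmaCompactSpace.sfin_isCountableOpenCover,
    isHurewiczSpace_of_sigmaCompactSpace.ufin_isGammaCover⟩
end

section
/- Give ℤ^ℕ the product topology (ℤ discrete) and pointwise addition. If L ⊆ ℤ^ℕ satisfies L + L = ℤ^ℕ (every element of ℤ^ℕ is a sum of two elements of L), then L with the subspace topology does not satisfy Ufin(Γ,Ω). -/
open Set

universe u

variable {X : Type u} [TopologicalSpace X]

/-!
Suppose `X` satisfies Ufin(Γ,Ω), and for each `n` let `S n 0 ⊆ S n 1 ⊆ ⋯` be open sets exhausting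
`X`. Then a single `b : ℕ → ℕ` works for all finite sets: every finite `F ⊆ X` lies in `S n (b n)`
for infinitely many `n`. Apply this to `X = L ⊆ ∏ E n` and `S n m = {x | ‖x n‖ < m}`. An element `h`
of the group generated by `L` is a sum of `k` elements of `F ∪ -F` for some finite `F ⊆ L`, so
`‖h n‖ ≤ k * b n` for infinitely many `n`. Hence no `h` with `n * b n < ‖h n‖` for all `n` lies in
that group.
-/

open Filter

theorem exists_sUnion_subset_of_monotone {α ι : Type*} [Preorder ι] [IsDirectedOrder ι] [Nonempty ι]
    {S : ι → Set α} (hS : Monotone S) {V : Set (Set α)} (hV : V.Finite) (hVS : V ⊆ range S) :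
    ∃ i, ⋃₀ V ⊆ S i := by
  choose! index hindex using hVS
  obtain ⟨i, hi⟩ := (hV.image index).bddAbove
  exact ⟨i, sUnion_subset fun v hv =>
    (hindex hv).ge.trans (hS (hi (mem_image_of_mem index hv)))⟩

theorem isGammaCover_range_of_monotone {S : ℕ → Set X} (hS : Monotone S)
    (hopen : ∀ m, IsOpen (S m)) (hcover : ⋃ m, S m = univ) (hne : ∀ m, S m ≠ univ) :
    IsGammaCover (range S) := by
  refine ⟨countable_range S, fun hfin => ?_, forall_mem_range.2 hopen, fun x => ?_⟩
  · obtain ⟨m, hm⟩ := exists_sUnion_subset_of_monotone hS hfin Subset.rfl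
    rw [sUnion_range, hcover] at hm
    exact hne m (univ_subset_iff.1 hm)
  · obtain ⟨k, hk⟩ := iUnion_eq_univ_iff.1 hcover x
    refine ((finite_Iio k).image S).subset ?_
    rintro _ ⟨⟨m, rfl⟩, hm⟩
    exact ⟨m, not_le.1 fun hkm => hm (hS hkm hk), rfl⟩

theorem IsOmegaCover.frequently_subset {W : ℕ → Set X} (hW : IsOmegaCover (range W))
    {F : Set X} (hF : F.Finite) : ∃ᶠ n in atTop, F ⊆ W n := by
  obtain ⟨-, -, huniv, hsub⟩ := hW
  have hmiss : ∀ n, ∃ x, x ∉ W n := fun n => (ne_univ_iff_exists_notMem _).1 fun h => huniv ⟨n, h⟩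
  choose x hx using hmiss
  refine frequently_atTop.2 fun N => ?_
  -- Adding to `F` a point outside each of `W 0, …, W (N - 1)` forces the index to be at least `N`.
  obtain ⟨_, ⟨n, rfl⟩, hn⟩ := hsub (F ∪ x '' Iio N) (hF.union ((finite_Iio N).image x))
  obtain ⟨hFn, hxn⟩ := union_subset_iff.1 hn
  exact ⟨n, not_lt.1 fun hnN => hx n (hxn (mem_image_of_mem x hnN)), hFn⟩

theorem Ufin.exists_frequently_subset_of_ne_univ (hX : Ufin (X := X) IsOmegaCover)
    {S : ℕ → ℕ → Set X} (hS : ∀ n, Monotone (S n)) (hopen : ∀ n m, IsOpen (S n m))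
    (hcover : ∀ n, ⋃ m, S n m = univ) (hne : ∀ n m, S n m ≠ univ) :
    ∃ b : ℕ → ℕ, ∀ F : Set X, F.Finite → ∃ᶠ n in atTop, F ⊆ S n (b n) := by
  obtain ⟨V, hV, hVcover⟩ := hX (fun n => range (S n)) fun n =>
    isGammaCover_range_of_monotone (hS n) (hopen n) (hcover n) (hne n)
  choose b hb using fun n => exists_sUnion_subset_of_monotone (hS n) (hV n).1 (hV n).2
  have hVne : ¬ ∃ n, ⋃₀ V n = univ := fun ⟨n, hn⟩ =>
    hne n (b n) (univ_subset_iff.1 (hn ▸ hb n))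
  have homega : IsOmegaCover (range fun n => ⋃₀ V n) := hVcover.resolve_left hVne
  exact ⟨b, fun F hF => (homega.frequently_subset hF).mono fun n hn => hn.trans (hb n)⟩

theorem Ufin.exists_frequently_subset (hX : Ufin (X := X) IsOmegaCover)
    {S : ℕ → ℕ → Set X} (hS : ∀ n, Monotone (S n)) (hopen : ∀ n m, IsOpen (S n m))
    (hcover : ∀ n, ⋃ m, S n m = univ) :
    ∃ b : ℕ → ℕ, ∀ F : Set X, F.Finite → ∃ᶠ n in atTop, F ⊆ S n (b n) := by
  by_cases hfull : ∃ᶠ n in atTop, ∃ m, S n m = univ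
  · exact ⟨fun n => Classical.epsilon fun m => S n m = univ, fun F _ =>
      hfull.mono fun n hn => (subset_univ F).trans (Classical.epsilon_spec hn).ge⟩
  · obtain ⟨N, hN⟩ := eventually_atTop.1 (not_frequently.1 hfull)
    obtain ⟨b, hb⟩ := hX.exists_frequently_subset_of_ne_univ (S := fun n => S (n + N))
      (fun n => hS (n + N)) (fun n => hopen (n + N)) (fun n => hcover (n + N))
      (fun n m h => hN (n + N) (Nat.le_add_left N n) ⟨m, h⟩)
    refine ⟨fun n => b (n - N), fun F hF => (tendsto_add_atTop_nat N).frequently ?_⟩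
    simpa only [Nat.add_sub_cancel] using hb F hF

theorem exists_finite_norm_apply_le_of_mem_closure {ι : Type*} {E : ι → Type*}
    [∀ i, SeminormedAddGroup (E i)] {L : Set (∀ i, E i)} {h : ∀ i, E i}
    (hh : h ∈ AddSubgroup.closure L) :
    ∃ F ⊆ L, F.Finite ∧ ∃ k : ℕ, ∀ i C, (∀ x ∈ F, ‖x i‖ ≤ C) → ‖h i‖ ≤ k * C := by
  induction hh using AddSubgroup.closure_induction with
  | mem x hx =>
    exact ⟨{x}, singleton_subset_iff.2 hx, finite_singleton x, 1, fun i C hC => by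
      simpa using hC x rfl⟩
  | zero => exact ⟨∅, empty_subset L, finite_empty, 0, fun i C _ => by simp⟩
  | add f g _ _ hf hg =>
    obtain ⟨F, hFL, hF, k, hk⟩ := hf
    obtain ⟨G, hGL, hG, l, hl⟩ := hg
    refine ⟨F ∪ G, union_subset hFL hGL, hF.union hG, k + l, fun i C hC => ?_⟩
    calc ‖f i + g i‖ ≤ ‖f i‖ + ‖g i‖ := norm_add_le _ _
      _ ≤ k * C + l * C :=
        add_le_add (hk i C fun x hx => hC x (.inl hx)) (hl i C fun x hx => hC x (.inr hx))
      _ = (k + l : ℕ) * C := by push_cast; ring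
  | neg f _ hf => simpa only [Pi.neg_apply, norm_neg] using hf

theorem stmt6_general {E : ℕ → Type*} [∀ n, SeminormedAddGroup (E n)]
    (hE : ∀ n (C : ℝ), ∃ x : E n, C < ‖x‖) {L : Set (∀ n, E n)}
    (hL : AddSubgroup.closure L = ⊤) : ¬ Ufin (X := ↥L) IsOmegaCover := by
  intro hX
  obtain ⟨b, hb⟩ := hX.exists_frequently_subset (S := fun n m => {x : ↥L | ‖x.1 n‖ < m})
    (fun n m m' hm x (hx : ‖x.1 n‖ < m) => hx.trans_le (Nat.cast_le.2 hm))
    (fun n m => isOpen_lt ((continuous_apply n).comp continuous_subtype_val).norm continuous_const)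
    (fun n => iUnion_eq_univ_iff.2 fun x => exists_nat_gt ‖x.1 n‖)
  choose h hh using fun n => hE n (n * b n)
  obtain ⟨F, hFL, hF, k, hk⟩ :=
    exists_finite_norm_apply_le_of_mem_closure (hL ▸ AddSubgroup.mem_top h)
  have hfreq := hb (Subtype.val ⁻¹' F) (hF.preimage Subtype.val_injective.injOn)
  obtain ⟨n, hFn, hkn⟩ := (hfreq.and_eventually (eventually_ge_atTop k)).exists
  have hle : ‖h n‖ ≤ n * b n :=
    calc ‖h n‖ ≤ k * b n := hk n (b n) fun x hx => (hFn (a := ⟨x, hFL hx⟩) hx).le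
      _ ≤ n * b n := by gcongr
  exact (hh n).not_ge hle

theorem closure_eq_top_of_forall_exists_add {G : Type*} [AddGroup G] {L : Set G}
    (hL : ∀ h, ∃ f ∈ L, ∃ g ∈ L, f + g = h) : AddSubgroup.closure L = ⊤ := by
  refine (AddSubgroup.eq_top_iff' _).2 fun h => ?_
  obtain ⟨f, hf, g, hg, rfl⟩ := hL h
  exact add_mem (AddSubgroup.subset_closure hf) (AddSubgroup.subset_closure hg)

theorem exists_int_lt_norm (C : ℝ) : ∃ x : ℤ, C < ‖x‖ := by
  obtain ⟨n, hn⟩ := exists_nat_gt C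
  exact ⟨n, by simpa using hn⟩

theorem stmt6 (L : Set (ℕ → ℤ))
    (hL : ∀ h : ℕ → ℤ, ∃ f ∈ L, ∃ g ∈ L, f + g = h) :
    ¬ Ufin (X := ↥L) IsOmegaCover := by
  exact stmt6_general (fun _ => exists_int_lt_norm) (closure_eq_top_of_forall_exists_add hL)
end

section
/- If a topological space X does not satisfy S1(Γ,Γ), then there exists a family F ⊆ ℕ^ℕ with cardinality at most the cardinality of X that is unbounded with respect to eventual domination: there is no g ∈ ℕ^ℕ such that every f ∈ F satisfies f(n) ≤ g(n) for all but finitely many n. -/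
open Set

universe u

variable {X : Type u} [TopologicalSpace X]

/-!
Enumerate each cover injectively as `e n 0, e n 1, …` and let `f x n` be the index from which on
`x` lies in every `e n k`. If a single `g` eventually dominated every `f x`, then selecting from the
tails `{e n k | g n ≤ k}` would leave each point out of only finitely many selected sets. As the
tails are infinite, the selected sets can be taken pairwise distinct, so they would form a γ-cover.
-/

open Filter Function

theorem exists_injective_forall_mem_of_infinite {ι α : Type*} [Countable ι] {A : ι → Set α}
    (hA : ∀ i, (A i).Infinite) : ∃ v : ι → α, Injective v ∧ ∀ i, v i ∈ A i := by
  classical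
  obtain ⟨c, hc⟩ := exists_injective_nat ι
  -- Sets of these sizes satisfy Hall's condition: if `c ≤ m` on `s`, then `s` has at most `m + 1`
  -- elements.
  choose t htA htcard using fun i => (hA i).exists_subset_card_eq (c i + 1)
  have hall (s : Finset ι) : s.card ≤ (s.biUnion t).card := by
    rcases s.eq_empty_or_nonempty with rfl | hs
    · simp
    obtain ⟨i, his, hmax⟩ := s.exists_max_image c hs
    calc
      s.card = (s.image c).card := (Finset.card_image_of_injective s hc).symm
      _ ≤ (Finset.range (c i + 1)).card :=
        Finset.card_le_card (Finset.image_subset_iff.2 fun j hj =>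
          Finset.mem_range_succ_iff.2 (hmax j hj))
      _ = (t i).card := by rw [Finset.card_range, htcard]
      _ ≤ (s.biUnion t).card := Finset.card_le_card (Finset.subset_biUnion_of_mem t his)
  obtain ⟨v, hv, hvt⟩ := (Finset.all_card_le_biUnion_card_iff_exists_injective t).1 hall
  exact ⟨v, hv, fun i => htA i (hvt i)⟩

/-- The least index from which on `x` belongs to every term of the sequence `W`, so that domination
of these indices controls membership in tails. It is `0` if there is no such index. -/
noncomputable def entryIndex {α : Type*} (W : ℕ → Set α) (x : α) : ℕ :=
  sInf {m | ∀ k ≥ m, x ∈ W k}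

theorem mem_of_entryIndex_le {α : Type*} {W : ℕ → Set α} {x : α} {k : ℕ}
    (hx : ∀ᶠ n in atTop, x ∈ W n) (hk : entryIndex W x ≤ k) : x ∈ W k :=
  Nat.sInf_mem (eventually_atTop.1 hx) k hk

theorem isGammaCover_range_iff {ι : Type*} [Countable ι] [Infinite ι] {V : ι → Set X}
    (hV : Injective V) :
    IsGammaCover (range V) ↔ (∀ i, IsOpen (V i)) ∧ ∀ x, ∀ᶠ i in cofinite, x ∈ V i := by
  have finite_iff (x : X) : {u ∈ range V | x ∉ u}.Finite ↔ ∀ᶠ i in cofinite, x ∈ V i := by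
    have himage : {u ∈ range V | x ∉ u} = V '' {i | x ∉ V i} := by grind
    rw [himage, finite_image_iff hV.injOn, eventually_cofinite]
  simp only [IsGammaCover, countable_range, infinite_range_of_injective hV, forall_mem_range,
    finite_iff, true_and]

theorem IsGammaCover.exists_injective_range_eq {U : Set (Set X)} (hU : IsGammaCover U) :
    ∃ e : ℕ → Set X, Injective e ∧ range e = U := by
  obtain ⟨hcount, hinf, -⟩ := hU
  have := hcount.to_subtype
  have := hinf.to_subtype
  obtain ⟨φ⟩ := nonempty_equiv_of_countable (α := ℕ) (β := U)
  exact ⟨(↑) ∘ φ, Subtype.val_injective.comp φ.injective,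
    by rw [φ.surjective.range_comp, Subtype.range_coe]⟩

theorem exists_forall_mem_isGammaCover_range {ι : Type*} [Countable ι] [Infinite ι]
    {A : ι → Set (Set X)} (hinf : ∀ i, (A i).Infinite) (hopen : ∀ i, ∀ u ∈ A i, IsOpen u)
    (hmem : ∀ x, ∀ᶠ i in cofinite, ∀ u ∈ A i, x ∈ u) :
    ∃ V : ι → Set X, (∀ i, V i ∈ A i) ∧ IsGammaCover (range V) := by
  obtain ⟨V, hV, hVA⟩ := exists_injective_forall_mem_of_infinite hinf
  exact ⟨V, hVA, (isGammaCover_range_iff hV).2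
    ⟨fun i => hopen i (V i) (hVA i), fun x => (hmem x).mono fun i hi => hi (V i) (hVA i)⟩⟩

theorem exists_selection_of_entryIndex_eventually_le {e : ℕ → ℕ → Set X}
    (he : ∀ n, Injective (e n)) (hγ : ∀ n, IsGammaCover (range (e n))) {g : ℕ → ℕ}
    (hg : ∀ x, ∀ᶠ n in atTop, entryIndex (e n) x ≤ g n) :
    ∃ V : ℕ → Set X, (∀ n, V n ∈ range (e n)) ∧ IsGammaCover (range V) := by
  have hmem (n : ℕ) (x : X) : ∀ᶠ k in atTop, x ∈ e n k := by
    rw [← Nat.cofinite_eq_atTop]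
    exact ((isGammaCover_range_iff (he n)).1 (hγ n)).2 x
  have tail_infinite (n : ℕ) : (e n '' Ici (g n)).Infinite :=
    (Ici_infinite (g n)).image (he n).injOn
  have tail_open (n : ℕ) : ∀ u ∈ e n '' Ici (g n), IsOpen u :=
    forall_mem_image.2 fun k _ => ((isGammaCover_range_iff (he n)).1 (hγ n)).1 k
  have mem_tail (x : X) : ∀ᶠ n in cofinite, ∀ u ∈ e n '' Ici (g n), x ∈ u := by
    rw [Nat.cofinite_eq_atTop]
    filter_upwards [hg x] with n hn
    exact forall_mem_image.2 fun k hk => mem_of_entryIndex_le (hmem n x) (hn.trans hk)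
  obtain ⟨V, hV, hVγ⟩ := exists_forall_mem_isGammaCover_range tail_infinite tail_open mem_tail
  exact ⟨V, fun n => image_subset_range _ _ (hV n), hVγ⟩

theorem stmt13 {X : Type u} [TopologicalSpace X]
    (h : ¬ S1 (X := X) IsGammaCover IsGammaCover) :
    ∃ F : Set (ℕ → ℕ),
      Cardinal.lift.{u} (Cardinal.mk F) ≤ Cardinal.lift.{0} (Cardinal.mk X) ∧
      ¬ ∃ g : ℕ → ℕ, ∀ f ∈ F, ∀ᶠ n in Filter.atTop, f n ≤ g n := by
  simp only [S1, not_forall] at h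
  obtain ⟨U, hU, no_selection⟩ := h
  choose e he hrange using fun n => (hU n).exists_injective_range_eq
  obtain rfl : (fun n => range (e n)) = U := funext hrange
  refine ⟨range fun x n => entryIndex (e n) x, Cardinal.mk_range_le_lift, ?_⟩
  rintro ⟨g, hg⟩
  exact no_selection
    (exists_selection_of_entryIndex_eventually_le he hU fun x => hg _ (mem_range_self x))
end
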